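/- If T ∈ V^⊗k has rank ≤ r and Γ ⊂ G_T is a finite subgroup of the symmetry group of T, then T admits a (not necessarily minimal) rank decomposition S with at most r·|Γ| terms that is Γ-invariant, i.e., Γ ⊆ Γ_S, obtained by replacing each summand of a rank decomposition with its Γ-orbit averaged with appropriate scalars. -/

import Mathlib

/-!
Averaging a decomposition `T = ∑ t` over `Γ` gives `T = ∑_{(γ, t)} |Γ|⁻¹ • γ • t`, a `Γ`-equivariant
family of rank-one tensors indexed by `Γ × S₀`, where `Γ` translates the first factor. Since a
decomposition is a *set* of tensors, coinciding terms have to be merged: the family is replaced by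
its set of values `b`, each multiplied by its (`Γ`-invariant) number of occurrences. After this
rescaling two terms may coincide again, if they are proportional and lie in different orbits, so the
merging is iterated. Every merging that is not injective lowers the number of terms, so the process
stops at an invariant set with at most `r * |Γ|` elements (`exists_invariant_of_weighted`). Scalar
multiples of rank-one tensors remain rank-one because `1 ≤ k`.
-/

open TensorProduct

/-- The multiplicity with which an equivariant family takes the value `b` is invariant; `e` is the
action on the index type. -/
lemma card_fiber_smul {X Γ ι : Type*} [DecidableEq X] [Group Γ] [MulAction Γ X]
    (e : Γ → ι → ι) (he : ∀ γ, Function.Injective (e γ)) (A : Finset ι)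
    (hA : ∀ γ, ∀ i ∈ A, e γ i ∈ A) (F : ι → X) (hF : ∀ γ i, F (e γ i) = γ • F i) (γ : Γ) (b : X) :
    (A.filter (fun i => F i = γ • b)).card = (A.filter (fun i => F i = b)).card := by
  have key : ∀ (γ : Γ) (b : X),
      (A.filter (fun i => F i = b)).card ≤ (A.filter (fun i => F i = γ • b)).card := by
    intro γ b
    refine Finset.card_le_card_of_injOn (e γ) ?_ (he γ).injOn
    intro i hi
    simp only [Finset.coe_filter, Set.mem_ofPred_eq] at hi ⊢
    exact ⟨hA γ i hi.1, by rw [hF, hi.2]⟩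
  refine le_antisymm ?_ (key γ b)
  simpa using key γ⁻¹ (γ • b)

lemma sum_image_fiber {X ι : Type*} [DecidableEq X] [AddCommMonoid X] (A : Finset ι) (F : ι → X) :
    ∑ b ∈ A.image F, (A.filter (fun i => F i = b)).card • b = ∑ i ∈ A, F i :=
  (Finset.sum_comp (fun b => b) F).symm

/-- A `Γ`-invariant finite set with `Γ`-invariant integer weights can be turned into a `Γ`-invariant
finite set, no larger, whose unweighted sum is the given weighted sum. -/
lemma exists_invariant_of_weighted {X Γ : Type*} [DecidableEq X] [AddCommGroup X] [Group Γ]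
    [DistribMulAction Γ X] (P : X → Prop) (hP : ∀ (n : ℕ) x, P x → P (n • x)) (N : ℕ) :
    ∀ (A : Finset X) (w : X → ℕ), A.card ≤ N → (∀ x ∈ A, P x) →
      (∀ γ : Γ, ∀ x ∈ A, γ • x ∈ A) → (∀ (γ : Γ) x, w (γ • x) = w x) →
      ∃ S : Finset X, S.card ≤ A.card ∧ ∑ x ∈ S, x = ∑ x ∈ A, w x • x ∧ (∀ x ∈ S, P x) ∧
        ∀ γ : Γ, ∀ x ∈ S, γ • x ∈ S := by
  induction N with
  | zero =>
    intro A w hN _ _ _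
    obtain rfl : A = ∅ := by simpa using hN
    exact ⟨∅, by simp⟩
  | succ N ih =>
    intro A w hN hAP hA hw
    set F : X → X := fun x => w x • x with hFdef
    have hF : ∀ (γ : Γ) x, F (γ • x) = γ • F x := fun γ x => by
      simp only [hFdef, hw]
      exact (map_nsmul (DistribSMul.toAddMonoidHom X γ) (w x) x).symm
    have hP' : ∀ x ∈ A.image F, P x := by
      intro x hx
      obtain ⟨y, hy, rfl⟩ := Finset.mem_image.1 hx
      exact hP _ _ (hAP y hy)
    have hA' : ∀ γ : Γ, ∀ x ∈ A.image F, γ • x ∈ A.image F := by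
      intro γ x hx
      obtain ⟨y, hy, rfl⟩ := Finset.mem_image.1 hx
      exact Finset.mem_image.2 ⟨γ • y, hA γ y hy, hF γ y⟩
    by_cases hinj : Set.InjOn F A
    · exact ⟨A.image F, Finset.card_image_le, Finset.sum_image hinj, hP', hA'⟩
    · have hlt : (A.image F).card < A.card :=
        lt_of_le_of_ne Finset.card_image_le fun h => hinj (Finset.card_image_iff.1 h)
      obtain ⟨S, h1, h2, h3, h4⟩ := ih (A.image F)
        (fun b => (A.filter (fun i => F i = b)).card) (by omega) hP' hA'
        (card_fiber_smul (fun (γ : Γ) x => γ • x) MulAction.injective A hA F hF)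
      exact ⟨S, h1.trans hlt.le, h2.trans (sum_image_fiber A F), h3, h4⟩

lemma smul_tprod_eq_tprod {k : ℕ} (hk : 1 ≤ k) {V : Type*} [AddCommGroup V] [Module ℂ V] (c : ℂ)
    (x : ⨂[ℂ] _ : Fin k, V) (hx : ∃ v : Fin k → V, x = PiTensorProduct.tprod ℂ v) :
    ∃ v : Fin k → V, c • x = PiTensorProduct.tprod ℂ v := by
  obtain ⟨v, rfl⟩ := hx
  refine ⟨Function.update v ⟨0, hk⟩ (c • v ⟨0, hk⟩), ?_⟩
  rw [MultilinearMap.map_update_smul, Function.update_eq_self]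

/-- If T ∈ V^⊗k has rank ≤ r (i.e. admits a decomposition into at most r
rank-one tensors) and Γ is a finite subgroup of the symmetry group of T (a group acting
linearly on V^⊗k, preserving rank-one tensors and fixing T), then T admits a rank
decomposition S with at most r·|Γ| terms that is Γ-invariant: Γ ⊆ Γ_S. -/
theorem stmt_9 (k : ℕ) (hk : 1 ≤ k) (V : Type*) [AddCommGroup V] [Module ℂ V]
    (G : Type*) [Group G] [DistribMulAction G (⨂[ℂ] _ : Fin k, V)]
    [SMulCommClass G ℂ (⨂[ℂ] _ : Fin k, V)]
    [DecidableEq (⨂[ℂ] _ : Fin k, V)]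
    (hrk : ∀ (g : G) (x : ⨂[ℂ] _ : Fin k, V),
      (∃ v : Fin k → V, x = PiTensorProduct.tprod ℂ v) →
        ∃ v : Fin k → V, g • x = PiTensorProduct.tprod ℂ v)
    (r : ℕ) (T : ⨂[ℂ] _ : Fin k, V)
    (hT : ∃ S₀ : Finset (⨂[ℂ] _ : Fin k, V), S₀.card ≤ r ∧ (∑ t ∈ S₀, t = T) ∧
      ∀ t ∈ S₀, ∃ v : Fin k → V, t = PiTensorProduct.tprod ℂ v)
    (Γ : Subgroup G) [Finite Γ] (hΓ : ∀ γ ∈ Γ, γ • T = T) :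
    ∃ S : Finset (⨂[ℂ] _ : Fin k, V),
      S.card ≤ r * Nat.card Γ ∧ (∑ t ∈ S, t = T) ∧
      (∀ t ∈ S, ∃ v : Fin k → V, t = PiTensorProduct.tprod ℂ v) ∧
      ∀ γ ∈ Γ, S.image (γ • ·) = S := by
  classical
  obtain ⟨S₀, hcard, hsum, hrank⟩ := hT
  have : Fintype Γ := Fintype.ofFinite Γ
  set c : ℂ := (Nat.card Γ : ℂ)⁻¹ with hc
  have hc' : (Nat.card Γ : ℂ) ≠ 0 := Nat.cast_ne_zero.2 Nat.card_pos.ne'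
  set F : Γ × (⨂[ℂ] _ : Fin k, V) → (⨂[ℂ] _ : Fin k, V) := fun p => c • (p.1 • p.2) with hFdef
  set e : Γ → Γ × (⨂[ℂ] _ : Fin k, V) → Γ × (⨂[ℂ] _ : Fin k, V) :=
    fun γ p => (γ * p.1, p.2) with he
  set A : Finset (Γ × (⨂[ℂ] _ : Fin k, V)) := Finset.univ ×ˢ S₀ with hAdef
  have heinj : ∀ γ, Function.Injective (e γ) := by
    rintro γ ⟨a, x⟩ ⟨b, y⟩ h
    simpa [he] using h
  have hA : ∀ γ, ∀ p ∈ A, e γ p ∈ A := by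
    intro γ p hp
    simpa [hAdef, he] using hp
  have hF : ∀ γ p, F (e γ p) = γ • F p := by
    intro γ p
    simp only [hFdef, he, mul_smul]
    exact (smul_comm (γ : G) c _).symm
  have hAsum : ∑ p ∈ A, F p = T := by
    have h : ∀ γ : Γ, ∑ t ∈ S₀, F (γ, t) = c • T := by
      intro γ
      simp only [hFdef]
      rw [← Finset.smul_sum, ← Finset.smul_sum, hsum]
      exact congrArg (c • ·) (hΓ γ γ.2)
    rw [hAdef, Finset.sum_product, Finset.sum_congr rfl fun γ _ => h γ, Finset.sum_const,
      Finset.card_univ, ← Nat.card_eq_fintype_card, ← Nat.cast_smul_eq_nsmul ℂ, smul_smul, hc,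
      mul_inv_cancel₀ hc', one_smul]
  have hAcard : A.card ≤ r * Nat.card Γ := by
    rw [hAdef, Finset.card_product, Finset.card_univ, ← Nat.card_eq_fintype_card, mul_comm]
    exact Nat.mul_le_mul_right _ hcard
  obtain ⟨S, h1, h2, h3, h4⟩ := exists_invariant_of_weighted (Γ := Γ)
    (fun x : ⨂[ℂ] _ : Fin k, V => ∃ v : Fin k → V, x = PiTensorProduct.tprod ℂ v)
    (fun n x hx => by
      rw [← Nat.cast_smul_eq_nsmul ℂ]
      exact smul_tprod_eq_tprod hk _ x hx)
    (A.image F).card (A.image F) (fun b => (A.filter (fun i => F i = b)).card) le_rfl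
    (by
      intro x hx
      obtain ⟨p, hp, rfl⟩ := Finset.mem_image.1 hx
      exact smul_tprod_eq_tprod hk _ _ (hrk p.1 p.2 (hrank _ (Finset.mem_product.1 hp).2)))
    (by
      intro γ x hx
      obtain ⟨p, hp, rfl⟩ := Finset.mem_image.1 hx
      exact Finset.mem_image.2 ⟨e γ p, hA γ p hp, hF γ p⟩)
    (card_fiber_smul e heinj A hA F hF)
  refine ⟨S, h1.trans (Finset.card_image_le.trans hAcard),
    h2.trans ((sum_image_fiber A F).trans hAsum), h3, fun γ hγ => ?_⟩
  -- An injective self-map of a finite set is onto.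
  refine Finset.eq_of_subset_of_card_le ?_ ?_
  · intro x hx
    obtain ⟨y, hy, rfl⟩ := Finset.mem_image.1 hx
    exact h4 ⟨γ, hγ⟩ y hy
  · rw [Finset.card_image_of_injective _ (MulAction.injective γ)]
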